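/- Let 𝒢 be a class of finite simple graphs closed under taking induced subgraphs (a hereditary class). Then there exists a function g : ℕ → ℕ such that every graph G ∈ 𝒢 satisfies tree-α(G) ≤ g(tree-μ(G)) if and only if there exists a positive integer t such that no graph in 𝒢 is isomorphic to K_{t,t}. -/

import Mathlib

open SimpleGraph

/-- A tree decomposition of a (finite, simple) graph `G`: a finite tree `T` together with
bags `bag x ⊆ V` such that every vertex is in a bag, every edge is inside some bag, and for
every vertex the set of nodes whose bag contains it induces a connected subtree of `T`. -/
structure TreeDecomp {V : Type} (G : SimpleGraph V) where
  ι : Type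
  fintype_ι : Fintype ι
  T : SimpleGraph ι
  isTree : T.IsTree
  bag : ι → Set V
  mem_bag : ∀ v : V, ∃ x : ι, v ∈ bag x
  edge_bag : ∀ ⦃u v : V⦄, G.Adj u v → ∃ x : ι, u ∈ bag x ∧ v ∈ bag x
  bag_conn : ∀ v : V, (T.induce {x : ι | v ∈ bag x}).Connected

/-- `a`, `b` enumerate the endpoints of an induced matching of size `n` in `G`:
the edges `a i — b i` are present, and endpoints of distinct edges are pairwise distinct
and non-adjacent. -/
def IsIndMatching {V : Type} (G : SimpleGraph V) {n : ℕ} (a b : Fin n → V) : Prop :=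
  (∀ i, G.Adj (a i) (b i)) ∧
  ∀ i j : Fin n, i ≠ j →
    a i ≠ a j ∧ a i ≠ b j ∧ b i ≠ a j ∧ b i ≠ b j ∧
    ¬ G.Adj (a i) (a j) ∧ ¬ G.Adj (a i) (b j) ∧ ¬ G.Adj (b i) (a j) ∧ ¬ G.Adj (b i) (b j)

/-- `μ(T,β) ≤ μ`: every induced matching touching a bag of the decomposition has size at
most `μ`. -/
def TreeDecomp.MuLE {V : Type} {G : SimpleGraph V} (td : TreeDecomp G) (μ : ℕ) : Prop :=
  ∀ (x : td.ι) (n : ℕ) (a b : Fin n → V),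
    IsIndMatching G a b → (∀ i, a i ∈ td.bag x ∨ b i ∈ td.bag x) → n ≤ μ

/-- `α(T,β) ≤ k`: every independent set contained in a single bag has size at most `k`. -/
def TreeDecomp.AlphaLE {V : Type} {G : SimpleGraph V} (td : TreeDecomp G) (k : ℕ) : Prop :=
  ∀ (x : td.ι) (I : Finset V), ↑I ⊆ td.bag x →
    ((I : Set V)).Pairwise (fun u v => ¬ G.Adj u v) → I.card ≤ k

/-- The induced matching treewidth `tree-μ(G)`: the least `n` admitting a tree decomposition
with `μ(T,β) ≤ n`. -/
noncomputable def treeMu {V : Type} (G : SimpleGraph V) : ℕ :=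
  sInf {n | ∃ td : TreeDecomp G, td.MuLE n}

/-- The tree-independence number `tree-α(G)`: the least `n` admitting a tree decomposition
with `α(T,β) ≤ n`. -/
noncomputable def treeAlpha {V : Type} (G : SimpleGraph V) : ℕ :=
  sInf {n | ∃ td : TreeDecomp G, td.AlphaLE n}

open scoped Finset

/-!
For the forward direction, every tree decomposition has a bag containing the whole neighbourhood of
some vertex, so `tree-α(K_{t,t}) ≥ t`, whereas two edges of `K_{t,t}` never form an induced
matching, so `tree-μ(K_{t,t}) ≤ 1`.

Conversely, let `G` have no induced `K_{t,t}`, take a tree decomposition with `μ ≤ k`, fix a large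
`m`, and let `I` be a maximal independent set of vertices that are not centres of an induced
`K_{1,m}`. Add to each bag the neighbours of its members in `I`; then some bag contains `N(i)` for
each `i ∈ I`, so `I` can be moved out of the bags into new leaf bags `N[i]`, whose independence
number is at most `m`. If `U` dominates an independent subset `J` of a bag and has bounded degree
into `J`, a minimal dominating subset of `U` together with private neighbours is an induced
matching touching the bag, so `J` is small. With `U ⊆ I` this handles every vertex of a bag except
the centres of an induced `K_{1,m}`. For `k * t + 1` independent such centres, discarding the
leaves adjacent to at least `t` of them and choosing an independent transversal of what remains
yields a `U` of degree less than `t`; both steps rely on the absence of `K_{t,t}`.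
-/

section IndepSet

variable {V : Type*} {G : SimpleGraph V}

theorem not_adj_of_isIndepSet {s : Set V} (hs : G.IsIndepSet s) {u v : V} (hu : u ∈ s)
    (hv : v ∈ s) : ¬ G.Adj u v :=
  fun h => hs hu hv h.ne h

theorem isIndepSet_insert {s : Set V} (hs : G.IsIndepSet s) {v : V}
    (hv : ∀ u ∈ s, ¬ G.Adj v u) : G.IsIndepSet (insert v s) :=
  Set.Pairwise.insert hs fun u hu _ => ⟨hv u hu, fun h => hv u hu h.symm⟩

theorem exists_isIndepSet_forall_exists_adj [Finite V] (A : Set V) :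
    ∃ I : Finset V, ↑I ⊆ A ∧ G.IsIndepSet (I : Set V) ∧ ∀ v ∈ A, v ∉ I → ∃ i ∈ I, G.Adj i v := by
  classical
  obtain ⟨I, ⟨hIA, hI⟩, hmax⟩ :=
    (Set.toFinite {I : Finset V | ↑I ⊆ A ∧ G.IsIndepSet (I : Set V)}).exists_maximal
      ⟨∅, by simp⟩
  refine ⟨I, hIA, hI, fun v hvA hvI => ?_⟩
  by_contra! hnadj
  have hinsert : G.IsIndepSet (insert v I : Set V) :=
    isIndepSet_insert hI fun i hi h => hnadj i hi h.symm
  have hle : insert v I ≤ I :=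
    hmax (by simpa [Set.insert_subset_iff, hvA, hIA] using hinsert) (Finset.subset_insert v I)
  exact hvI (hle (Finset.mem_insert_self v I))

/-- `v` is the centre of an induced star `K_{1,m}` of `G`, that is, `m` pairwise non-adjacent
vertices are adjacent to `v`. -/
def IsStarCenter (G : SimpleGraph V) (m : ℕ) (v : V) : Prop :=
  ∃ J : Finset V, G.IsIndepSet (J : Set V) ∧ m ≤ #J ∧ ∀ j ∈ J, G.Adj v j

theorem card_lt_of_not_isStarCenter {m : ℕ} {v : V} (hv : ¬ IsStarCenter G m v) {J : Finset V}
    (hJ : G.IsIndepSet (J : Set V)) (hvJ : ∀ j ∈ J, G.Adj v j) : #J < m :=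
  lt_of_not_ge fun hle => hv ⟨J, hJ, hle, hvJ⟩

end IndepSet

section Biclique

theorem completeBipartiteGraph_adj_or_adj {α β : Type*} {u v : α ⊕ β}
    (h : (completeBipartiteGraph α β).Adj u v) (w : α ⊕ β) :
    (completeBipartiteGraph α β).Adj u w ∨ (completeBipartiteGraph α β).Adj v w := by
  rcases u with _ | _ <;> rcases v with _ | _ <;> rcases w with _ | _ <;> simp_all

theorem IsIndMatching.le_one_of_completeBipartiteGraph {α β : Type} {n : ℕ}
    {a b : Fin n → α ⊕ β} (h : IsIndMatching (completeBipartiteGraph α β) a b) : n ≤ 1 := by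
  rw [← Fin.subsingleton_iff_le_one]
  refine ⟨fun i j => ?_⟩
  by_contra hij
  obtain ⟨-, -, -, -, haa, -, hba, -⟩ := h.2 i j hij
  exact (completeBipartiteGraph_adj_or_adj (h.1 i) (a j)).elim haa hba

theorem isStarCenter_completeBipartiteGraph {α : Type*} [Fintype α] (v : α ⊕ α) :
    IsStarCenter (completeBipartiteGraph α α) (Fintype.card α) v := by
  rcases v with a | b
  · refine ⟨Finset.univ.map .inr, ?_, by simp, by simp⟩
    rintro _ hu _ hv -
    simp only [Finset.coe_map, Set.mem_image] at hu hv
    obtain ⟨⟨_, -, rfl⟩, ⟨_, -, rfl⟩⟩ := And.intro hu hv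
    simp
  · refine ⟨Finset.univ.map .inl, ?_, by simp, by simp⟩
    rintro _ hu _ hv -
    simp only [Finset.coe_map, Set.mem_image] at hu hv
    obtain ⟨⟨_, -, rfl⟩, ⟨_, -, rfl⟩⟩ := And.intro hu hv
    simp

variable {V : Type*} {G : SimpleGraph V}

theorem completeBipartiteGraph_isIndContained {α β : Type*} (f : α ↪ V) (g : β ↪ V)
    (hf : G.IsIndepSet (Set.range f)) (hg : G.IsIndepSet (Set.range g))
    (hfg : ∀ a b, G.Adj (f a) (g b)) : completeBipartiteGraph α β ⊴ G := by
  refine ⟨⟨⟨Sum.elim f g, f.injective.sumElim g.injective fun a b => (hfg a b).ne⟩, ?_⟩⟩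
  rintro (a | b) (a' | b')
  · simpa using not_adj_of_isIndepSet hf ⟨a, rfl⟩ ⟨a', rfl⟩
  · simpa using hfg a b'
  · simpa using (hfg a' b).symm
  · simpa using not_adj_of_isIndepSet hg ⟨b, rfl⟩ ⟨b', rfl⟩

theorem card_lt_of_not_isIndContained {t : ℕ}
    (hG : ¬ completeBipartiteGraph (Fin t) (Fin t) ⊴ G) {P Q : Finset V}
    (hP : G.IsIndepSet (P : Set V)) (hQ : G.IsIndepSet (Q : Set V))
    (hPQ : ∀ p ∈ P, ∀ q ∈ Q, G.Adj p q) (hcard : t ≤ #P) : #Q < t := by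
  by_contra! htQ
  have exists_embedding {R : Finset V} (htR : t ≤ #R) : Nonempty (Fin t ↪ R) :=
    Function.Embedding.nonempty_of_card_le (by simpa using htR)
  obtain ⟨f⟩ := exists_embedding hcard
  obtain ⟨g⟩ := exists_embedding htQ
  refine hG (completeBipartiteGraph_isIndContained (f.trans (.subtype _)) (g.trans (.subtype _))
    (hP.mono ?_) (hQ.mono ?_) fun a b => hPQ _ (f a).2 _ (g b).2)
  · rintro _ ⟨a, rfl⟩
    exact (f a).2
  · rintro _ ⟨b, rfl⟩
    exact (g b).2

section Counting

variable [DecidableRel G.Adj] {t : ℕ}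

theorem card_filter_le_card_filter_adj_le (hG : ¬ completeBipartiteGraph (Fin t) (Fin t) ⊴ G)
    {P Q : Finset V} (hP : G.IsIndepSet (P : Set V)) (hQ : G.IsIndepSet (Q : Set V)) :
    #{p ∈ P | t ≤ #{q ∈ Q | G.Adj p q}} ≤ t * 2 ^ #Q := by
  classical
  rw [← Finset.card_powerset]
  refine Finset.card_le_mul_card_image_of_maps_to (f := fun p => {q ∈ Q | G.Adj p q})
    (fun p _ => Finset.mem_powerset.2 (Finset.filter_subset _ Q)) t fun W hW => ?_
  set F := {p ∈ {p ∈ P | t ≤ #{q ∈ Q | G.Adj p q}} | {q ∈ Q | G.Adj p q} = W} with hF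
  rcases F.eq_empty_or_nonempty with hempty | ⟨p₀, hp₀⟩
  · simp [hempty]
  have htW : t ≤ #W := by
    simp only [hF, Finset.mem_filter] at hp₀
    exact hp₀.2 ▸ hp₀.1.2
  have hFP : F ⊆ P := (Finset.filter_subset _ _).trans (Finset.filter_subset _ _)
  refine (card_lt_of_not_isIndContained hG (hQ.mono ?_) (hP.mono ?_) ?_ htW).le
  · exact_mod_cast Finset.mem_powerset.1 hW
  · exact_mod_cast hFP
  · intro w hw p hp
    rw [← (Finset.mem_filter.1 hp).2] at hw
    exact (Finset.mem_filter.1 hw).2.symm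

theorem card_filter_card_filter_not_adj_lt_lt
    (hG : ¬ completeBipartiteGraph (Fin t) (Fin t) ⊴ G) {P Q : Finset V}
    (hP : G.IsIndepSet (P : Set V)) (hQ : G.IsIndepSet (Q : Set V)) {n : ℕ}
    (hcard : t * n + t ≤ #Q) : #{p ∈ P | #{q ∈ Q | ¬ G.Adj p q} < n} < t := by
  classical
  by_contra! hle
  obtain ⟨S, hS, hSt⟩ := Finset.exists_subset_card_eq hle
  let N : Finset V := S.biUnion fun p => {q ∈ Q | ¬ G.Adj p q}
  have hN : #N ≤ t * n := hSt ▸ Finset.card_biUnion_le_card_mul S _ n fun p hp =>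
    (Finset.mem_filter.1 (hS hp)).2.le
  have hlt : #(Q \ N) < t := by
    refine card_lt_of_not_isIndContained hG (hP.mono ?_) (hQ.mono ?_) ?_ hSt.ge
    · exact_mod_cast hS.trans (Finset.filter_subset _ P)
    · exact_mod_cast Finset.sdiff_subset
    · intro p hp q hq
      by_contra hpq
      rw [Finset.mem_sdiff] at hq
      exact hq.2 (Finset.mem_biUnion.2 ⟨p, hp, Finset.mem_filter.2 ⟨hq.1, hpq⟩⟩)
  have := Finset.le_card_sdiff N Q
  omega

theorem exists_forall_le_card_filter_not_adj
    (hG : ¬ completeBipartiteGraph (Fin t) (Fin t) ⊴ G) {ι : Type*} {L : Finset ι} {P : Finset V}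
    {J : ι → Finset V} (hP : G.IsIndepSet (P : Set V))
    (hJ : ∀ i ∈ L, G.IsIndepSet (J i : Set V)) {n : ℕ} (hPcard : #L * t < #P)
    (hJcard : ∀ i ∈ L, t * n + t ≤ #(J i)) :
    ∃ p ∈ P, ∀ i ∈ L, n ≤ #{v ∈ J i | ¬ G.Adj p v} := by
  classical
  let bad : Finset V := L.biUnion fun i => {p ∈ P | #{v ∈ J i | ¬ G.Adj p v} < n}
  have hbad : #bad ≤ #L * t := Finset.card_biUnion_le_card_mul L _ t fun i hi =>
    (card_filter_card_filter_not_adj_lt_lt hG hP (hJ i hi) (hJcard i hi)).le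
  obtain ⟨p, hpP, hpbad⟩ := Finset.exists_mem_notMem_of_card_lt_card (hbad.trans_lt hPcard)
  refine ⟨p, hpP, fun i hi => ?_⟩
  by_contra! hlt
  exact hpbad (Finset.mem_biUnion.2 ⟨i, hi, Finset.mem_filter.2 ⟨hpP, hlt⟩⟩)

end Counting

/-- In a graph without an induced `K_{t,t}`, any `n` independent sets with at least
`transversalBound t n` vertices each have an independent transversal. -/
def transversalBound (t : ℕ) : ℕ → ℕ
  | 0 => 0
  | n + 1 => t * (transversalBound t n + n + 1) + 1

theorem exists_isIndepSet_transversal [Nonempty V] {t : ℕ}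
    (hG : ¬ completeBipartiteGraph (Fin t) (Fin t) ⊴ G) {ι : Type*} (L : Finset ι)
    (J : ι → Finset V) (hJ : ∀ i ∈ L, G.IsIndepSet (J i : Set V))
    (hcard : ∀ i ∈ L, transversalBound t #L ≤ #(J i)) :
    ∃ f : ι → V, (∀ i ∈ L, f i ∈ J i) ∧ G.IsIndepSet (f '' L) := by
  classical
  induction L using Finset.induction_on generalizing J with
  | empty => exact ⟨fun _ => Classical.arbitrary V, by simp⟩
  | insert a L ha ih =>
    simp only [Finset.forall_mem_insert, Finset.card_insert_of_notMem ha, transversalBound]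
      at hJ hcard
    obtain ⟨p, hpJ, hp⟩ := exists_forall_le_card_filter_not_adj hG hJ.1 hJ.2
      (n := transversalBound t #L) (by nlinarith) fun i hi => by nlinarith [hcard.2 i hi]
    obtain ⟨f, hfJ, hf⟩ := ih (fun i => {v ∈ J i | ¬ G.Adj p v})
      (fun i hi => (hJ.2 i hi).mono (mod_cast Finset.filter_subset _ (J i))) hp
    simp only [Finset.mem_filter] at hfJ
    have hcongr : ∀ i ∈ L, Function.update f a p i = f i := fun i hi =>
      Function.update_of_ne (ne_of_mem_of_not_mem hi ha) _ _
    refine ⟨Function.update f a p, ?_, ?_⟩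
    · simp only [Finset.forall_mem_insert, Function.update_self]
      exact ⟨hpJ, fun i hi => (hcongr i hi).symm ▸ (hfJ i hi).1⟩
    · rw [Finset.coe_insert, Set.image_insert_eq, Function.update_self, Set.image_congr hcongr]
      exact isIndepSet_insert hf (Set.forall_mem_image.2 fun i hi => (hfJ i hi).2)

theorem exists_isIndepSet_dominating [DecidableRel G.Adj] {t : ℕ}
    (hG : ¬ completeBipartiteGraph (Fin t) (Fin t) ⊴ G) {Y : Finset V}
    (hY : G.IsIndepSet (Y : Set V))
    (hstar : ∀ y ∈ Y, IsStarCenter G (t * 2 ^ #Y + transversalBound t #Y) y) :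
    ∃ U : Finset V, G.IsIndepSet (U : Set V) ∧ (∀ y ∈ Y, ∃ u ∈ U, G.Adj u y) ∧
      ∀ u ∈ U, #{y ∈ Y | G.Adj u y} < t := by
  classical
  rcases Y.eq_empty_or_nonempty with rfl | ⟨y₀, -⟩
  · exact ⟨∅, by simp⟩
  have : Nonempty V := ⟨y₀⟩
  choose! J hJ hJcard hJadj using hstar
  let J' : V → Finset V := fun y => {j ∈ J y | ¬ t ≤ #{z ∈ Y | G.Adj j z}}
  have hJ'card : ∀ y ∈ Y, transversalBound t #Y ≤ #(J' y) := fun y hy => by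
    have hfew := card_filter_le_card_filter_adj_le hG (hJ y hy) hY
    have hsplit := Finset.card_filter_add_card_filter_not (s := J y)
      fun j => t ≤ #{z ∈ Y | G.Adj j z}
    have := hJcard y hy
    lia
  obtain ⟨f, hfJ', hf⟩ := exists_isIndepSet_transversal hG Y J'
    (fun y hy => (hJ y hy).mono (mod_cast Finset.filter_subset _ (J y))) hJ'card
  simp only [J', Finset.mem_filter, not_le] at hfJ'
  refine ⟨Y.image f, by simpa using hf, fun y hy => ?_, ?_⟩
  · exact ⟨f y, Finset.mem_image_of_mem f hy, (hJadj y hy _ (hfJ' y hy).1).symm⟩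
  · exact Finset.forall_mem_image.2 fun y hy => (hfJ' y hy).2

end Biclique

section Tree

variable {ι κ : Type*}

theorem isPath_append {T : SimpleGraph ι} {x y z : ι} {p : T.Walk x y} {q : T.Walk y z}
    (hp : p.IsPath) (hq : q.IsPath) (hpq : ∀ u ∈ p.support, u ∈ q.support → u = y) :
    (p.append q).IsPath := by
  have hqtail : (y :: q.support.tail).Nodup := by
    rw [q.cons_tail_support]
    exact hq.support_nodup
  rw [Walk.isPath_def, Walk.support_append, List.nodup_append]
  refine ⟨hp.support_nodup, hqtail.of_cons, fun u hup v hvq => ?_⟩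
  rintro rfl
  obtain rfl : u = y := hpq u hup (List.mem_of_mem_tail hvq)
  exact (List.nodup_cons.1 hqtail).1 hvq

theorem exists_isPath_append_of_connected_induce {T : SimpleGraph ι} (hT : T.Connected) (r : ι)
    {C : Set ι} (hC : (T.induce C).Connected) :
    ∃ w ∈ C, ∀ y ∈ C, ∃ (p : T.Walk r w) (q : T.Walk w y), (p.append q).IsPath ∧
      (∀ u ∈ p.support, u ≠ w → T.dist r u < T.dist r w) ∧ ∀ u ∈ q.support, u ∈ C := by
  classical
  have hCne : C.Nonempty := Set.nonempty_coe_sort.1 hC.nonempty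
  let w := Function.argminOn (T.dist r) C hCne
  have hwC : w ∈ C := Function.argminOn_mem _ _ hCne
  refine ⟨w, hwC, fun y hy => ?_⟩
  obtain ⟨p, hp, hplen⟩ := hT.exists_path_of_dist r w
  obtain ⟨q, hq⟩ := hC.exists_isPath ⟨w, hwC⟩ ⟨y, hy⟩
  have hpdist : ∀ u ∈ p.support, u ≠ w → T.dist r u < T.dist r w := fun u hu huw =>
    hplen ▸ (dist_le _).trans_lt (Walk.length_takeUntil_lt_length hu huw)
  let q' : T.Walk w y := q.map (Embedding.induce C).toHom
  have hq' : q'.IsPath := hq.map Subtype.val_injective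
  have hq'C : ∀ u ∈ q'.support, u ∈ C := by
    intro u hu
    obtain ⟨z, -, rfl⟩ := List.mem_map.1 (Walk.support_map _ q ▸ hu)
    exact z.2
  refine ⟨p, q', isPath_append hp hq' fun u hup huq => ?_, hpdist, hq'C⟩
  by_contra huw
  exact (hpdist u hup huw).not_ge (Function.argminOn_le _ _ (hq'C u huq))

theorem isAcyclic_of_induce_of_neighborSet_subsingleton {G : SimpleGraph ι} {s : Set ι}
    (hs : (G.induce s).IsAcyclic) (hsub : ∀ v ∉ s, (G.neighborSet v).Subsingleton) :
    G.IsAcyclic := by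
  classical
  intro v c hc
  have hcs : ∀ u ∈ c.support, u ∈ s := fun u hu => by
    by_contra hus
    have hrot : (c.rotate u hu).IsCycle := hc.rotate hu
    exact hrot.snd_ne_penultimate (hsub u hus (Walk.adj_snd hrot.not_nil)
      (Walk.adj_penultimate hrot.not_nil).symm)
  refine hs (c.induce s hcs) ?_
  rw [← Walk.isCycle_map_iff_of_injective (f := (Embedding.induce s).toHom) Subtype.val_injective]
  simpa using hc

/-- The graph obtained from `T` by attaching, for every `i : κ`, a new leaf `Sum.inr i` to the
vertex `p i`. -/
def attachLeaves (T : SimpleGraph ι) (p : κ → ι) : SimpleGraph (ι ⊕ κ) where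
  Adj
    | .inl x, .inl y => T.Adj x y
    | .inl x, .inr i => x = p i
    | .inr i, .inl x => x = p i
    | .inr _, .inr _ => False
  symm := ⟨by rintro (x | i) (y | j) h; exacts [h.symm, h, h, h]⟩
  loopless := ⟨by rintro (x | i) h; exacts [T.irrefl h, h]⟩

theorem attachLeaves_connected_induce {T : SimpleGraph ι} {p : κ → ι} {D : Set (ι ⊕ κ)}
    (hconn : (T.induce (Sum.inl ⁻¹' D)).Connected) (hleaf : ∀ i, .inr i ∈ D → .inl (p i) ∈ D) :
    ((attachLeaves T p).induce D).Connected := by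
  rw [connected_iff_exists_forall_reachable]
  obtain ⟨⟨x₀, hx₀⟩⟩ := hconn.nonempty
  let φ : T.induce (Sum.inl ⁻¹' D) →g (attachLeaves T p).induce D :=
    ⟨fun x => ⟨.inl x, x.2⟩, fun h => h⟩
  have hinl : ∀ x, ∀ hx : .inl x ∈ D,
      ((attachLeaves T p).induce D).Reachable ⟨.inl x₀, hx₀⟩ ⟨.inl x, hx⟩ := fun x hx =>
    (hconn.preconnected ⟨x₀, hx₀⟩ ⟨x, hx⟩).map φ
  refine ⟨⟨.inl x₀, hx₀⟩, ?_⟩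
  rintro ⟨x | i, h⟩
  · exact hinl x h
  · have hadj : ((attachLeaves T p).induce D).Adj ⟨.inl (p i), hleaf i h⟩ ⟨.inr i, h⟩ :=
      show p i = p i from rfl
    exact (hinl (p i) (hleaf i h)).trans hadj.reachable

theorem isTree_attachLeaves {T : SimpleGraph ι} (hT : T.IsTree) (p : κ → ι) :
    (attachLeaves T p).IsTree where
  connected := by
    rw [← (induceUnivIso _).connected_iff]
    exact attachLeaves_connected_induce ((induceUnivIso T).connected_iff.2 hT.connected)
      fun _ _ => trivial
  isAcyclic := by
    refine isAcyclic_of_induce_of_neighborSet_subsingleton (s := Set.range Sum.inl) ?_ ?_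
    · let φ : T ≃g (attachLeaves T p).induce (Set.range Sum.inl) :=
        ⟨Equiv.ofInjective Sum.inl Sum.inl_injective, Iff.rfl⟩
      exact φ.isAcyclic_iff.1 hT.isAcyclic
    · rintro (x | i) hx
      · exact (hx ⟨x, rfl⟩).elim
      · rintro (y | j) hy (z | k) hz
        exacts [congrArg _ (Eq.trans hy (Eq.symm hz)), hz.elim, hy.elim, hy.elim]

end Tree

section Matching

theorem isIndMatching_of_adj_iff {V : Type} {G : SimpleGraph V} {n : ℕ} {a b : Fin n → V}
    (ha : G.IsIndepSet (Set.range a)) (hb : G.IsIndepSet (Set.range b))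
    (hab : ∀ i j, G.Adj (a i) (b j) ↔ i = j) : IsIndMatching G a b := by
  have hadj : ∀ i, G.Adj (a i) (b i) := fun i => (hab i i).2 rfl
  have haa : ∀ i j, ¬ G.Adj (a i) (a j) := fun i j => not_adj_of_isIndepSet ha ⟨i, rfl⟩ ⟨j, rfl⟩
  have hbb : ∀ i j, ¬ G.Adj (b i) (b j) := fun i j => not_adj_of_isIndepSet hb ⟨i, rfl⟩ ⟨j, rfl⟩
  refine ⟨hadj, fun i j hij => ⟨fun h => hij ?_, fun h => haa j i ?_, fun h => haa i j ?_,
    fun h => hij ?_, haa i j, fun h => hij ?_, fun h => hij ?_, hbb i j⟩⟩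
  · exact (hab i j).1 (h ▸ hadj j)
  · exact h ▸ hadj j
  · exact h ▸ hadj i
  · exact (hab i j).1 (h ▸ hadj i)
  · exact (hab i j).1 h
  · exact ((hab j i).1 h.symm).symm

theorem exists_subset_forall_exists_private {α β : Type*} {r : α → β → Prop} {U : Finset α}
    {J : Finset β} (hU : ∀ j ∈ J, ∃ u ∈ U, r u j) :
    ∃ D ⊆ U, (∀ j ∈ J, ∃ d ∈ D, r d j) ∧ ∀ d ∈ D, ∃ j ∈ J, ∀ u ∈ D, r u j ↔ u = d := by
  classical
  obtain ⟨D, hDU, hmin⟩ := exists_minimal_le_of_wellFoundedLT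
    (fun D : Finset α => ∀ j ∈ J, ∃ d ∈ D, r d j) U hU
  refine ⟨D, hDU, hmin.prop, fun d hd => ?_⟩
  have herase : ¬ ∀ j ∈ J, ∃ u ∈ D.erase d, r u j :=
    hmin.not_prop_of_lt (Finset.erase_ssubset hd)
  push Not at herase
  obtain ⟨j, hj, hdj⟩ := herase
  have honly : ∀ u ∈ D, r u j → u = d := fun u hu huj => by
    by_contra hud
    exact hdj u (Finset.mem_erase.2 ⟨hud, hu⟩) huj
  obtain ⟨u, hu, huj⟩ := hmin.prop j hj
  obtain rfl := honly u hu huj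
  exact ⟨j, hj, fun v hv => ⟨honly v hv, fun h => h ▸ huj⟩⟩

end Matching

namespace TreeDecomp

section Constructions

variable {V : Type} {G : SimpleGraph V}

/-- The tree decomposition with a single bag, which contains all vertices. -/
def univBag (G : SimpleGraph V) : TreeDecomp G where
  ι := Unit
  fintype_ι := inferInstance
  T := ⊥
  isTree := .of_subsingleton
  bag _ := Set.univ
  mem_bag _ := ⟨(), Set.mem_univ _⟩
  edge_bag _ _ _ := ⟨(), Set.mem_univ _, Set.mem_univ _⟩
  bag_conn v :=
    have : Nonempty {_x : Unit | v ∈ Set.univ} := ⟨⟨(), Set.mem_univ v⟩⟩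
    IsTree.of_subsingleton.connected

/-- The tree decomposition on the same tree in which every vertex of `I` brings its whole
neighbourhood along into every bag that contains it. -/
def addNeighbors (td : TreeDecomp G) (I : Set V) : TreeDecomp G where
  ι := td.ι
  fintype_ι := td.fintype_ι
  T := td.T
  isTree := td.isTree
  bag x := {v | v ∈ td.bag x ∨ ∃ i ∈ I, G.Adj v i ∧ i ∈ td.bag x}
  mem_bag v := (td.mem_bag v).imp fun _ => .inl
  edge_bag _ _ h := (td.edge_bag h).imp fun _ => .imp .inl .inl
  bag_conn v := by
    obtain ⟨x₀, hx₀⟩ := td.mem_bag v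
    refine td.T.induce_connected_of_patches x₀ (Or.inl hx₀) ?_
    rintro x (hx | ⟨i, hiI, hvi, hx⟩)
    · exact ⟨{y | v ∈ td.bag y}, fun _ => .inl, hx₀, hx, (td.bag_conn v).preconnected _ _⟩
    · obtain ⟨y, hvy, hiy⟩ := td.edge_bag hvi
      exact ⟨{y | v ∈ td.bag y} ∪ {y | i ∈ td.bag y},
        Set.union_subset (fun _ => .inl) fun _ hz => .inr ⟨i, hiI, hvi, hz⟩, .inl hx₀, .inr hx,
        (induce_union_connected (td.bag_conn v).preconnected (td.bag_conn i).preconnected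
          ⟨y, hvy, hiy⟩).preconnected _ _⟩

/-- If every vertex `i` of the independent set `I` has its neighbourhood contained in the bag of
`p i`, then `I` can be removed from all bags, provided that the closed neighbourhood of `i`
becomes the bag of a new leaf attached to `p i`. -/
noncomputable def detach (td : TreeDecomp G) {I : Set V} [Finite I] (hI : G.IsIndepSet I)
    (p : I → td.ι) (hp : ∀ i : I, G.neighborSet i ⊆ td.bag (p i)) : TreeDecomp G where
  ι := td.ι ⊕ I
  fintype_ι := have := td.fintype_ι; Fintype.ofFinite _
  T := attachLeaves td.T p
  isTree := isTree_attachLeaves td.isTree p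
  bag := Sum.elim (fun x => td.bag x \ I) fun i => insert ↑i (G.neighborSet i)
  mem_bag v := by
    by_cases hv : v ∈ I
    · exact ⟨.inr ⟨v, hv⟩, .inl rfl⟩
    · exact (td.mem_bag v).elim fun x hx => ⟨.inl x, hx, hv⟩
  edge_bag u v h := by
    by_cases hu : u ∈ I
    · exact ⟨.inr ⟨u, hu⟩, .inl rfl, .inr h⟩
    by_cases hv : v ∈ I
    · exact ⟨.inr ⟨v, hv⟩, .inr h.symm, .inl rfl⟩
    · exact (td.edge_bag h).elim fun x hx => ⟨.inl x, ⟨hx.1, hu⟩, hx.2, hv⟩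
  bag_conn v := by
    by_cases hv : v ∈ I
    · rw [connected_iff_exists_forall_reachable]
      refine ⟨⟨.inr ⟨v, hv⟩, .inl rfl⟩, ?_⟩
      rintro ⟨x | i, hx⟩
      · exact (hx.2 hv).elim
      · rcases hx with rfl | hx
        · exact .rfl
        · exact (not_adj_of_isIndepSet hI i.2 hv hx).elim
    · refine attachLeaves_connected_induce ?_ ?_
      · have hnodes : {x | v ∈ td.bag x} = {x | v ∈ td.bag x \ I} := by simp [hv]
        change (td.T.induce {x | v ∈ td.bag x \ I}).Connected
        rw [← hnodes]
        exact td.bag_conn v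
      · rintro i (rfl | hiv)
        · exact (hv i.2).elim
        · exact ⟨hp i hiv, hv⟩

end Constructions

/- Root the tree. Every vertex `v` has a topmost node `w v` among the nodes whose bags contain it,
and a vertex `v` whose `w v` is deepest works: for a neighbour `u`, the path from the root to a
node shared by `u` and `v` passes through `w v` after entering the subtree of `u`. -/
theorem exists_neighborSet_subset_bag {V : Type} {G : SimpleGraph V} [Finite V] [Nonempty V]
    (td : TreeDecomp G) : ∃ v x, G.neighborSet v ⊆ td.bag x := by
  obtain ⟨r⟩ := td.isTree.connected.nonempty
  choose w hw hpath using fun v =>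
    exists_isPath_append_of_connected_induce td.isTree.connected r (td.bag_conn v)
  obtain ⟨v, hv⟩ := Finite.exists_max fun v => td.T.dist r (w v)
  refine ⟨v, w v, fun u huv => ?_⟩
  obtain ⟨y, hvy, huy⟩ := td.edge_bag huv
  obtain ⟨p, q, hpq, -, -⟩ := hpath v y hvy
  obtain ⟨p', q', hpq', hlt, hq'⟩ := hpath u y huy
  have heq : p.append q = p'.append q' := (td.isTree.existsUnique_path r y).unique hpq hpq'
  have hmem : w v ∈ (p'.append q').support := heq ▸ by simp
  rcases (Walk.mem_support_append_iff _ _).1 hmem with hp' | hq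
  · by_cases hne : w v = w u
    · exact hne ▸ hw u
    · exact absurd (hlt _ hp' hne) (hv u).not_gt
  · exact hq' _ hq

section MuBound

variable {V : Type} {G : SimpleGraph V} {td : TreeDecomp G} {k m : ℕ} {x : td.ι}

theorem MuLE.card_le_of_adj_iff (hk : td.MuLE k) {α : Type*} {S : Finset α} {a b : α → V}
    (ha : G.IsIndepSet (a '' S)) (hb : G.IsIndepSet (b '' S))
    (hab : ∀ i ∈ S, ∀ j ∈ S, G.Adj (a i) (b j) ↔ i = j)
    (hx : ∀ i ∈ S, a i ∈ td.bag x ∨ b i ∈ td.bag x) : #S ≤ k := by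
  let e : Fin #S ≃ S := S.equivFin.symm
  have hrange : ∀ f : α → V, Set.range (fun i => f (e i)) ⊆ f '' S := by
    rintro f _ ⟨i, rfl⟩
    exact Set.mem_image_of_mem f (e i).2
  refine hk x #S (fun i => a (e i)) (fun i => b (e i))
    (isIndMatching_of_adj_iff (ha.mono (hrange a)) (hb.mono (hrange b)) fun i j => ?_)
    fun i => hx _ (e i).2
  rw [hab _ (e i).2 _ (e j).2, Subtype.coe_inj, e.apply_eq_iff_eq]

theorem MuLE.card_le_of_dominating [DecidableRel G.Adj] (hk : td.MuLE k) {U J : Finset V}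
    (hU : G.IsIndepSet (U : Set V)) (hJ : G.IsIndepSet (J : Set V))
    (hdom : ∀ j ∈ J, ∃ u ∈ U, G.Adj u j) (hdeg : ∀ u ∈ U, #{j ∈ J | G.Adj u j} ≤ m)
    (hx : ∀ u ∈ U, ∀ j ∈ J, G.Adj u j → u ∈ td.bag x ∨ j ∈ td.bag x) : #J ≤ k * m := by
  classical
  obtain ⟨D, hDU, hdomD, hprivate⟩ := exists_subset_forall_exists_private hdom
  choose! f hfJ hf using hprivate
  have hD : #D ≤ k := by
    refine hk.card_le_of_adj_iff (a := id) (b := f) (hU.mono ?_) (hJ.mono ?_)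
      (fun u hu d hd => hf d hd u hu)
      fun d hd => hx d (hDU hd) (f d) (hfJ d hd) ((hf d hd d hd).2 rfl)
    · simpa using hDU
    · exact Set.image_subset_iff.2 hfJ
  have hcover : J ⊆ D.biUnion fun d => {j ∈ J | G.Adj d j} := fun j hj => by
    obtain ⟨d, hd, hdj⟩ := hdomD j hj
    exact Finset.mem_biUnion.2 ⟨d, hd, Finset.mem_filter.2 ⟨hj, hdj⟩⟩
  calc #J ≤ #(D.biUnion fun d => {j ∈ J | G.Adj d j}) := Finset.card_le_card hcover
    _ ≤ #D * m := Finset.card_biUnion_le_card_mul D _ m fun d hd => hdeg d (hDU hd)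
    _ ≤ k * m := Nat.mul_le_mul_right m hD

theorem MuLE.card_le_of_not_isStarCenter (hk : td.MuLE k) {U J : Finset V}
    (hU : G.IsIndepSet (U : Set V)) (hJ : G.IsIndepSet (J : Set V))
    (hdom : ∀ j ∈ J, ∃ u ∈ U, G.Adj u j) (hstar : ∀ u ∈ U, ¬ IsStarCenter G m u)
    (hx : ∀ u ∈ U, ∀ j ∈ J, G.Adj u j → u ∈ td.bag x ∨ j ∈ td.bag x) : #J ≤ k * m := by
  classical
  refine hk.card_le_of_dominating hU hJ hdom (fun u hu => ?_) hx
  exact (card_lt_of_not_isStarCenter (hstar u hu)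
    (hJ.mono (mod_cast Finset.filter_subset _ J)) fun j hj => (Finset.mem_filter.1 hj).2).le

/-- The star order `m` such that, if `G` has no induced `K_{t,t}` and every bag has induced
matching number at most `k`, then no bag contains more than `k * t` independent centres of
induced stars `K_{1,m}`. It makes `exists_isIndepSet_dominating` applicable to `k * t + 1` such
centres. -/
def starBound (t k : ℕ) : ℕ :=
  t * 2 ^ (k * t + 1) + transversalBound t (k * t + 1)

theorem MuLE.card_le_of_isStarCenter {t : ℕ}
    (hG : ¬ completeBipartiteGraph (Fin t) (Fin t) ⊴ G) (hk : td.MuLE k) {Z : Finset V}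
    (hZ : G.IsIndepSet (Z : Set V)) (hZx : ↑Z ⊆ td.bag x)
    (hstar : ∀ z ∈ Z, IsStarCenter G (starBound t k) z) : #Z ≤ k * t := by
  classical
  by_contra! hlt
  obtain ⟨Y, hYZ, hYcard⟩ := Finset.exists_subset_card_eq (Nat.succ_le_of_lt hlt)
  have hY : G.IsIndepSet (Y : Set V) := hZ.mono (mod_cast hYZ)
  obtain ⟨U, hU, hdom, hdeg⟩ := exists_isIndepSet_dominating hG hY fun y hy => by
    simpa only [starBound, hYcard] using hstar y (hYZ hy)
  have := hk.card_le_of_dominating hU hY hdom (fun u hu => (hdeg u hu).le)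
    fun _ _ y hy _ => .inr (hZx (hYZ hy))
  lia

theorem MuLE.card_le_of_subset_addNeighbors_bag {t : ℕ}
    (hG : ¬ completeBipartiteGraph (Fin t) (Fin t) ⊴ G) (hk : td.MuLE k) {I : Finset V}
    (hI : G.IsIndepSet (I : Set V)) (hIstar : ∀ i ∈ I, ¬ IsStarCenter G (starBound t k) i)
    (hmax : ∀ v, ¬ IsStarCenter G (starBound t k) v → v ∉ I → ∃ i ∈ I, G.Adj i v)
    {J : Finset V} (hJ : G.IsIndepSet (J : Set V)) (hJI : ∀ j ∈ J, j ∉ I)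
    (hJx : ↑J ⊆ (td.addNeighbors I).bag x) : #J ≤ 2 * (k * starBound t k) + k * t := by
  classical
  have hindep : ∀ {K : Finset V}, K ⊆ J → G.IsIndepSet (K : Set V) := fun hKJ =>
    hJ.mono (mod_cast hKJ)
  let Ix : Finset V := {i ∈ I | i ∈ td.bag x}
  have hnear : #{j ∈ J | ∃ i ∈ Ix, G.Adj i j} ≤ k * starBound t k :=
    hk.card_le_of_not_isStarCenter (x := x) (U := Ix)
      (hI.mono (mod_cast Finset.filter_subset _ I)) (hindep (Finset.filter_subset _ J))
      (fun j hj => (Finset.mem_filter.1 hj).2)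
      (fun i hi => hIstar i (Finset.mem_filter.1 hi).1)
      fun i hi _ _ _ => .inl (Finset.mem_filter.1 hi).2
  have hcommon : #{j ∈ J | j ∈ td.bag x ∧ ¬ IsStarCenter G (starBound t k) j} ≤
      k * starBound t k := by
    refine hk.card_le_of_not_isStarCenter (x := x) hI (hindep (Finset.filter_subset _ J))
      (fun j hj => ?_) hIstar fun _ _ j hj _ => .inr (Finset.mem_filter.1 hj).2.1
    obtain ⟨hjJ, -, hjstar⟩ := Finset.mem_filter.1 hj
    exact hmax j hjstar (hJI j hjJ)
  have hstars : #{j ∈ J | j ∈ td.bag x ∧ IsStarCenter G (starBound t k) j} ≤ k * t :=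
    hk.card_le_of_isStarCenter (x := x) hG (hindep (Finset.filter_subset _ J))
      (fun j hj => (Finset.mem_filter.1 (Finset.mem_coe.1 hj)).2.1)
      fun j hj => (Finset.mem_filter.1 hj).2.2
  have hcover : J ⊆ {j ∈ J | ∃ i ∈ Ix, G.Adj i j} ∪
      {j ∈ J | j ∈ td.bag x ∧ ¬ IsStarCenter G (starBound t k) j} ∪
      {j ∈ J | j ∈ td.bag x ∧ IsStarCenter G (starBound t k) j} := by
    intro j hj
    simp only [Ix, Finset.mem_union, Finset.mem_filter]
    rcases hJx hj with hjx | ⟨i, hi, hji, hix⟩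
    · by_cases hjstar : IsStarCenter G (starBound t k) j
      · exact .inr ⟨hj, hjx, hjstar⟩
      · exact .inl (.inr ⟨hj, hjx, hjstar⟩)
    · exact .inl (.inl ⟨hj, i, ⟨hi, hix⟩, hji.symm⟩)
  calc #J ≤ _ := (Finset.card_le_card hcover).trans (Finset.card_union_le _ _)
    _ ≤ k * starBound t k + k * starBound t k + k * t :=
      add_le_add ((Finset.card_union_le _ _).trans (add_le_add hnear hcommon)) hstars
    _ = 2 * (k * starBound t k) + k * t := by rw [two_mul]

/-- The bound on the tree-independence number of a graph that has no induced `K_{t,t}` and has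
induced matching treewidth at most `k`. -/
def alphaBound (t k : ℕ) : ℕ :=
  2 * (k * starBound t k) + k * t + starBound t k

theorem MuLE.exists_alphaLE [Finite V] {t : ℕ}
    (hG : ¬ completeBipartiteGraph (Fin t) (Fin t) ⊴ G) (hk : td.MuLE k) :
    ∃ td' : TreeDecomp G, td'.AlphaLE (alphaBound t k) := by
  classical
  obtain ⟨I, hIstar, hI, hmax⟩ :=
    exists_isIndepSet_forall_exists_adj (G := G) {v | ¬ IsStarCenter G (starBound t k) v}
  choose p hp using td.mem_bag
  refine ⟨(td.addNeighbors I).detach hI (fun i => p i)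
    fun i v hiv => .inr ⟨i, i.2, hiv.symm, hp i⟩, ?_⟩
  rintro (x | i) J hJx hJ
  · exact (hk.card_le_of_subset_addNeighbors_bag hG hI (fun i hi => hIstar hi) hmax hJ
      (fun j hj => (hJx hj).2) fun j hj => (hJx hj).1).trans (Nat.le_add_right _ _)
  · have hstar : #(J.erase i) < starBound t k := by
      refine card_lt_of_not_isStarCenter (hIstar i.2)
        (hJ.mono (mod_cast Finset.erase_subset _ J)) fun j hj => ?_
      rw [Finset.mem_erase] at hj
      exact (hJx hj.2).resolve_left hj.1
    calc
      #J ≤ #(J.erase i) + 1 := Nat.sub_le_iff_le_add.1 Finset.pred_card_le_card_erase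
      _ ≤ starBound t k := hstar
      _ ≤ alphaBound t k := Nat.le_add_left _ _

end MuBound

end TreeDecomp

section Widths

variable {V : Type}

theorem exists_muLE_treeMu [Finite V] (G : SimpleGraph V) :
    ∃ td : TreeDecomp G, td.MuLE (treeMu G) := by
  refine Nat.sInf_mem (s := {n | ∃ td : TreeDecomp G, td.MuLE n})
    ⟨Nat.card V, TreeDecomp.univBag G, fun _ n a b hab _ => ?_⟩
  have ha : Function.Injective a := fun i j hij => by
    by_contra hne
    exact (hab.2 i j hne).1 hij
  simpa using Nat.card_le_card_of_injective a ha

theorem exists_alphaLE_treeAlpha [Finite V] (G : SimpleGraph V) :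
    ∃ td : TreeDecomp G, td.AlphaLE (treeAlpha G) := by
  have := Fintype.ofFinite V
  exact Nat.sInf_mem (s := {n | ∃ td : TreeDecomp G, td.AlphaLE n})
    ⟨Fintype.card V, TreeDecomp.univBag G, fun _ I _ _ => I.card_le_univ⟩

theorem treeMu_completeBipartiteGraph_le_one (α β : Type) :
    treeMu (completeBipartiteGraph α β) ≤ 1 :=
  Nat.sInf_le ⟨TreeDecomp.univBag _, fun _ _ _ _ hab _ => hab.le_one_of_completeBipartiteGraph⟩

theorem exists_forall_isStarCenter_le_treeAlpha [Finite V] [Nonempty V] (G : SimpleGraph V) :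
    ∃ v, ∀ m, IsStarCenter G m v → m ≤ treeAlpha G := by
  obtain ⟨td, htd⟩ := exists_alphaLE_treeAlpha G
  obtain ⟨v, x, hvx⟩ := td.exists_neighborSet_subset_bag
  exact ⟨v, fun m ⟨J, hJ, hmJ, hvJ⟩ => hmJ.trans (htd x J (fun j hj => hvx (hvJ j hj)) hJ)⟩

theorem card_le_treeAlpha_completeBipartiteGraph (α : Type) [Fintype α] :
    Fintype.card α ≤ treeAlpha (completeBipartiteGraph α α) := by
  rcases isEmpty_or_nonempty α with _ | _
  · simp
  · obtain ⟨v, hv⟩ := exists_forall_isStarCenter_le_treeAlpha (completeBipartiteGraph α α)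
    exact hv _ (isStarCenter_completeBipartiteGraph v)

theorem treeAlpha_le_alphaBound [Finite V] {G : SimpleGraph V} {t : ℕ}
    (hG : ¬ completeBipartiteGraph (Fin t) (Fin t) ⊴ G) :
    treeAlpha G ≤ TreeDecomp.alphaBound t (treeMu G) := by
  obtain ⟨td, htd⟩ := exists_muLE_treeMu G
  exact Nat.sInf_le (htd.exists_alphaLE hG)

end Widths

/-- For a hereditary class `𝒢` of finite graphs (closed under induced subgraphs, hence also
under isomorphism), `tree-α` is bounded by a function of `tree-μ` on `𝒢` if and only if some
biclique `K_{t,t}` is absent from `𝒢`. -/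
theorem stmt2 (𝒢 : ∀ (V : Type), Fintype V → SimpleGraph V → Prop)
    (hher : ∀ (V W : Type) (iV : Fintype V) (iW : Fintype W)
      (G : SimpleGraph V) (H : SimpleGraph W), 𝒢 V iV G → (H ↪g G) → 𝒢 W iW H) :
    (∃ g : ℕ → ℕ, ∀ (V : Type) (iV : Fintype V) (G : SimpleGraph V),
        𝒢 V iV G → treeAlpha G ≤ g (treeMu G)) ↔
    (∃ t : ℕ, 0 < t ∧ ∀ (V : Type) (iV : Fintype V) (G : SimpleGraph V),
        𝒢 V iV G → IsEmpty (G ≃g completeBipartiteGraph (Fin t) (Fin t))) := by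
  constructor
  · rintro ⟨g, hg⟩
    refine ⟨g 0 + g 1 + 1, Nat.succ_pos _, fun V iV G hGc => ⟨fun e => ?_⟩⟩
    set t := g 0 + g 1 + 1
    have hbiclique := hher V _ iV inferInstance G _ hGc e.symm.toEmbedding
    have hα := card_le_treeAlpha_completeBipartiteGraph (Fin t)
    have hαg := hg _ _ _ hbiclique
    rw [Fintype.card_fin] at hα
    rcases Nat.le_one_iff_eq_zero_or_eq_one.1
      (treeMu_completeBipartiteGraph_le_one (Fin t) (Fin t)) with hμ | hμ
    all_goals
      rw [hμ] at hαg
      omega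
  · rintro ⟨t, -, hfree⟩
    refine ⟨TreeDecomp.alphaBound t, fun V iV G hGc => ?_⟩
    have hG : ¬ completeBipartiteGraph (Fin t) (Fin t) ⊴ G := fun ⟨φ⟩ =>
      (hfree _ _ _ (hher V _ iV inferInstance G _ hGc φ)).false .refl
    exact treeAlpha_le_alphaBound hG
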